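/- arXiv:1508.00099 — 2 statements merged into one kernel-verified Lean document; each statement's English description precedes it below -/
import Mathlib

section
/- Let X = (X_t)_{t∈[0,1]} be a centered Gaussian process with almost surely continuous sample paths such that ‖X_t − X_s‖₂ ≤ C|t−s|^H for all t, s ∈ [0,1], with constants C > 0 and H ∈ (0,1). Then for every integer n ≥ 2^{1/H}, Δ_n(X) := E[max_{0≤t≤1} X_t] − E[max_{0≤i≤n} X_{i/n}] satisfies Δ_n(X) ≤ (2C√(ln n)/n^H)·(1 + 4/n^H + 0.0074/(ln n)^{3/2}). -/
/-!
The proof is a chaining argument along the grids of mesh `n⁻¹, n⁻², n⁻³, …`. Passing from mesh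
`n⁻ᵏ` to `n⁻ᵏ⁻¹` increases the maximum by at most the largest of `nᵏ⁺¹` increments, each of them
sub-Gaussian with variance proxy `(C / nᵏᴴ)²`, hence by at most `C / nᵏᴴ * √(2 (k + 1) log n)` in
expectation. With `x = n⁻ᴴ` and `√(1 + j / 2) ≤ 1 + j / 4` these bounds add up to at most
`2 C x √(log n) ∑ⱼ xʲ (1 + j / 4)`, and the path maximum is the monotone limit of the grid maxima.
-/

open MeasureTheory ProbabilityTheory Real Set Filter Topology

noncomputable section

/-- `X` is a centered Gaussian process on the time set `S`: every finite linear
combination `∑ i, c i * X (ts i)` of its values at times in `S` is a centered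
Gaussian random variable. -/
def IsCenteredGaussianOn {Ω : Type} [MeasurableSpace Ω] (μ : Measure Ω)
    (X : ℝ → Ω → ℝ) (S : Set ℝ) : Prop :=
  (∀ t ∈ S, Measurable (X t)) ∧
  ∀ (k : ℕ) (c : Fin k → ℝ) (ts : Fin k → ℝ), (∀ i, ts i ∈ S) →
    ∃ v : NNReal, μ.map (fun ω => ∑ i, c i * X (ts i) ω) = gaussianReal 0 v

/-- The `L²`-norm `‖Y‖₂ = (E Y²)^{1/2}` of a real random variable. -/
def l2norm {Ω : Type} [MeasurableSpace Ω] (μ : Measure Ω) (Y : Ω → ℝ) : ℝ :=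
  Real.sqrt (∫ ω, (Y ω) ^ 2 ∂μ)

/-- The expected supremum `E [sup_{0 ≤ t ≤ 1} X_t]`. -/
def expMax {Ω : Type} [MeasurableSpace Ω] (μ : Measure Ω) (X : ℝ → Ω → ℝ) : ℝ :=
  ∫ ω, (⨆ t : Icc (0:ℝ) 1, X t.1 ω) ∂μ

/-- The expected maximum over the grid: `E [max_{0 ≤ i ≤ n} X_{i/n}]`. -/
def expMaxGrid {Ω : Type} [MeasurableSpace Ω] (μ : Measure Ω) (X : ℝ → Ω → ℝ) (n : ℕ) : ℝ :=
  ∫ ω, (⨆ i : Fin (n + 1), X (((i : ℕ) : ℝ) / (n : ℝ)) ω) ∂μ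

/-- `B` is a fractional Brownian motion with Hurst parameter `H`: a centered Gaussian
process on `[0,∞)` with a.s. continuous sample paths, `B 0 = 0`, and covariance
`E[B_s B_t] = (s^{2H} + t^{2H} - |t-s|^{2H}) / 2`. -/
def IsFBM {Ω : Type} [MeasurableSpace Ω] (μ : Measure Ω) (H : ℝ) (B : ℝ → Ω → ℝ) : Prop :=
  IsCenteredGaussianOn μ B (Ici 0) ∧
  (∀ᵐ ω ∂μ, ContinuousOn (fun t => B t ω) (Ici 0)) ∧
  (∀ᵐ ω ∂μ, B 0 ω = 0) ∧
  ∀ s t : ℝ, 0 ≤ s → 0 ≤ t →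
    ∫ ω, B s ω * B t ω ∂μ = (s ^ (2 * H) + t ^ (2 * H) - |t - s| ^ (2 * H)) / 2

section MonotoneLimit

variable {α : Type*} {mα : MeasurableSpace α} {μ : Measure α} {f : ℕ → α → ℝ} {F : α → ℝ} {B : ℝ}

theorem integrable_of_tendsto_of_monotone (hf : ∀ k, Integrable (f k) μ)
    (hmono : ∀ᵐ x ∂μ, Monotone fun k => f k x)
    (hlim : ∀ᵐ x ∂μ, Tendsto (fun k => f k x) atTop (𝓝 (F x)))
    (hB : ∀ k, ∫ x, f k x ∂μ ≤ B) : Integrable F μ := by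
  have hsub (k : ℕ) : Integrable (f k - f 0) μ := (hf k).sub (hf 0)
  have hlim' : ∀ᵐ x ∂μ, Tendsto (fun k => (f k - f 0) x) atTop (𝓝 ((F - f 0) x)) :=
    hlim.mono fun x hx => hx.sub_const _
  have hnorm (k : ℕ) : eLpNorm (f k - f 0) 1 μ ≤ ENNReal.ofReal (B - ∫ x, f 0 x ∂μ) := by
    have hnonneg : 0 ≤ᵐ[μ] f k - f 0 := hmono.mono fun x hx => sub_nonneg.2 (hx k.zero_le)
    rw [eLpNorm_one_eq_lintegral_enorm, ← ofReal_integral_norm_eq_lintegral_enorm (hsub k),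
      integral_congr_ae (hnonneg.mono fun x hx => norm_of_nonneg hx), integral_sub' (hf k) (hf 0)]
    exact ENNReal.ofReal_le_ofReal (sub_le_sub_right (hB k) _)
  have hF : eLpNorm (F - f 0) 1 μ < ⊤ :=
    calc eLpNorm (F - f 0) 1 μ
        ≤ liminf (fun k => eLpNorm (f k - f 0) 1 μ) atTop :=
          Lp.eLpNorm_lim_le_liminf_eLpNorm (fun k => (hsub k).1) _ hlim'
      _ ≤ ENNReal.ofReal (B - ∫ x, f 0 x ∂μ) :=
          liminf_le_of_frequently_le' (Frequently.of_forall hnorm)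
      _ < ⊤ := ENNReal.ofReal_lt_top
  have hFsub : Integrable (F - f 0) μ := memLp_one_iff_integrable.1
    ⟨aestronglyMeasurable_of_tendsto_ae _ (fun k => (hsub k).1) hlim', hF⟩
  simpa only [sub_add_cancel] using hFsub.add (hf 0)

theorem integral_le_of_tendsto_of_monotone (hf : ∀ k, Integrable (f k) μ)
    (hmono : ∀ᵐ x ∂μ, Monotone fun k => f k x)
    (hlim : ∀ᵐ x ∂μ, Tendsto (fun k => f k x) atTop (𝓝 (F x)))
    (hB : ∀ k, ∫ x, f k x ∂μ ≤ B) : ∫ x, F x ∂μ ≤ B :=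
  le_of_tendsto' (integral_tendsto_of_tendsto_of_monotone hf
    (integrable_of_tendsto_of_monotone hf hmono hlim hB) hmono hlim) hB

end MonotoneLimit

section FiniteMaximum

variable {Ω ι : Type*} {mΩ : MeasurableSpace Ω} {μ : Measure Ω}

theorem hasSubgaussianMGF_mono {Y : Ω → ℝ} {c d : NNReal} (hY : HasSubgaussianMGF Y c μ)
    (hcd : c ≤ d) : HasSubgaussianMGF Y d μ where
  integrable_exp_mul := hY.integrable_exp_mul
  mgf_le t := (hY.mgf_le t).trans (by gcongr)

theorem integrable_iSup_of_finite [Finite ι] [Nonempty ι] {Y : ι → Ω → ℝ}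
    (hY : ∀ i, Integrable (Y i) μ) : Integrable (fun ω => ⨆ i, Y i ω) μ := by
  cases nonempty_fintype ι
  have hsup : Integrable (Finset.univ.sup' Finset.univ_nonempty Y) μ :=
    Finset.sup'_induction (p := (Integrable · μ)) _ _ (fun _ hf _ hg => hf.sup hg) fun i _ => hY i
  convert! hsup using 1
  ext ω
  rw [Finset.sup'_apply, Finset.sup'_univ_eq_ciSup]

theorem exp_mul_iSup_le_sum_exp [Fintype ι] [Nonempty ι] (y : ι → ℝ) (t : ℝ) :
    exp (t * ⨆ i, y i) ≤ ∑ i, exp (t * y i) := by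
  obtain ⟨i, hi⟩ := exists_eq_ciSup_of_finite (f := y)
  rw [← hi]
  exact Finset.single_le_sum (f := fun i => exp (t * y i)) (fun _ _ => (exp_pos _).le)
    (Finset.mem_univ i)

variable [IsProbabilityMeasure μ] [Fintype ι] [Nonempty ι] {Y : ι → Ω → ℝ} {c : NNReal}

theorem mul_integral_iSup_le_log_card_add (hY : ∀ i, HasSubgaussianMGF (Y i) c μ) (t : ℝ) :
    t * ∫ ω, ⨆ i, Y i ω ∂μ ≤ log (Fintype.card ι) + c * t ^ 2 / 2 := by
  have hM : Integrable (fun ω => t * ⨆ i, Y i ω) μ :=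
    (integrable_iSup_of_finite fun i => (hY i).integrable).const_mul t
  have hsum : Integrable (fun ω => ∑ i, exp (t * Y i ω)) μ :=
    integrable_finsetSum _ fun i _ => (hY i).integrable_exp_mul t
  have hle (ω : Ω) : exp (t * ⨆ i, Y i ω) ≤ ∑ i, exp (t * Y i ω) :=
    exp_mul_iSup_le_sum_exp (Y · ω) t
  have hexp : Integrable (fun ω => exp (t * ⨆ i, Y i ω)) μ :=
    hsum.mono' (continuous_exp.comp_aestronglyMeasurable hM.1)
      (Eventually.of_forall fun ω => (norm_of_nonneg (exp_pos _).le).trans_le (hle ω))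
  rw [← exp_le_exp, exp_add, exp_log (Nat.cast_pos.2 Fintype.card_pos), ← integral_const_mul]
  calc exp (∫ ω, t * ⨆ i, Y i ω ∂μ)
      ≤ ∫ ω, exp (t * ⨆ i, Y i ω) ∂μ :=
        convexOn_exp.map_integral_le continuous_exp.continuousOn isClosed_univ (by simp) hM hexp
    _ ≤ ∫ ω, ∑ i, exp (t * Y i ω) ∂μ := integral_mono hexp hsum hle
    _ = ∑ i, mgf (Y i) μ t := integral_finsetSum _ fun i _ => (hY i).integrable_exp_mul t
    _ ≤ ∑ _i : ι, exp (c * t ^ 2 / 2) := Finset.sum_le_sum fun i _ => (hY i).mgf_le t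
    _ = Fintype.card ι * exp (c * t ^ 2 / 2) := by simp

theorem integral_iSup_le_sqrt_log_card (hY : ∀ i, HasSubgaussianMGF (Y i) c μ) :
    ∫ ω, ⨆ i, Y i ω ∂μ ≤ √(2 * c * log (Fintype.card ι)) := by
  -- A quadratic polynomial in `t` that is nonnegative on the whole line has discriminant `≤ 0`.
  have hdiscrim : discrim (c / 2 : ℝ) (-∫ ω, ⨆ i, Y i ω ∂μ) (log (Fintype.card ι)) ≤ 0 :=
    discrim_le_zero fun t => by linarith [mul_integral_iSup_le_log_card_add hY t]
  refine le_sqrt_of_sq_le ?_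
  rw [discrim] at hdiscrim
  linarith

end FiniteMaximum

/-- The maximum of `f` over the uniform grid `0, 1 / m, …, (m - 1) / m, 1` of mesh `1 / m` on
`[0, 1]`, for `m ≠ 0`. -/
def gridMax (f : ℝ → ℝ) (m : ℕ) : ℝ := ⨆ i : Fin (m + 1), f ((i : ℕ) / (m : ℝ))

section Grid

variable {f : ℝ → ℝ} {m n i : ℕ}

theorem natCast_div_natCast_mem_Icc (hi : i ≤ m) : (i / m : ℝ) ∈ Icc (0 : ℝ) 1 :=
  ⟨by positivity, div_le_one_of_le₀ (Nat.cast_le.2 hi) m.cast_nonneg⟩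

theorem abs_div_mul_sub_div_div_le (i m n : ℕ) :
    |(i / (m * n : ℕ) : ℝ) - (i / n : ℕ) / m| ≤ 1 / m := by
  have hfloor : ((i / n : ℕ) : ℝ) ≤ i / n := Nat.cast_div_le
  have hlt : (i / n : ℝ) < (i / n : ℕ) + 1 := by
    simpa [Nat.floor_div_eq_div] using Nat.lt_floor_add_one (i / n : ℝ)
  rw [Nat.cast_mul, mul_comm, ← div_div, ← sub_div, abs_of_nonneg (by bound)]
  gcongr
  linarith

theorem le_gridMax (f : ℝ → ℝ) (hi : i ≤ m) : f (i / m) ≤ gridMax f m :=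
  Finite.le_ciSup (fun i : Fin (m + 1) => f ((i : ℕ) / (m : ℝ))) ⟨i, by omega⟩

theorem gridMax_le {a : ℝ} (h : ∀ i ≤ m, f (i / m) ≤ a) : gridMax f m ≤ a :=
  ciSup_le fun i => h i (by omega)

theorem gridMax_le_gridMax_mul (f : ℝ → ℝ) (m : ℕ) (hn : n ≠ 0) :
    gridMax f m ≤ gridMax f (m * n) := by
  refine gridMax_le fun i hi => ?_
  have h := le_gridMax f (Nat.mul_le_mul_right n hi)
  rwa [Nat.cast_mul, Nat.cast_mul, mul_div_mul_right _ _ (Nat.cast_ne_zero.2 hn)] at h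

-- The common endpoint `1` of both grids needs no increment, so there are `m * n` of them.
theorem gridMax_mul_le (f : ℝ → ℝ) (hm : m ≠ 0) (hn : n ≠ 0) :
    gridMax f (m * n) ≤
      gridMax f m + ⨆ i : Fin (m * n), (f (i / (m * n : ℕ)) - f ((i / n : ℕ) / m)) := by
  have hincr (i : Fin (m * n)) := Finite.le_ciSup
    (fun i : Fin (m * n) => f (i / (m * n : ℕ)) - f ((i / n : ℕ) / m)) i
  refine gridMax_le fun i hi => ?_
  rcases hi.lt_or_eq with hlt | rfl
  · have hcoarse := le_gridMax f (Nat.div_le_of_le_mul (mul_comm m n ▸ hi))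
    linarith [hincr ⟨i, hlt⟩]
  · have hone := le_gridMax f (le_refl m)
    have hzero := hincr ⟨0, by positivity⟩
    simp only [Nat.zero_div, CharP.cast_eq_zero, zero_div, sub_self] at hzero
    rw [div_self (Nat.cast_ne_zero.2 hm)] at hone
    rw [div_self (Nat.cast_ne_zero.2 (mul_ne_zero hm hn))]
    linarith

theorem tendsto_gridMax (hf : ContinuousOn f (Icc 0 1)) {u : ℕ → ℕ} (hu : Tendsto u atTop atTop) :
    Tendsto (fun k => gridMax f (u k)) atTop (𝓝 (⨆ t : Icc (0 : ℝ) 1, f t)) := by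
  obtain ⟨t, ht, hmax⟩ := isCompact_Icc.exists_isMaxOn (nonempty_Icc.2 zero_le_one) hf
  have hsup : ⨆ t : Icc (0 : ℝ) 1, f t = f t :=
    (isLUB_ciSup ⟨f t, forall_mem_range.2 fun s => hmax s.2⟩).unique
      (IsGreatest.isLUB ⟨⟨⟨t, ht⟩, rfl⟩, forall_mem_range.2 fun s => hmax s.2⟩)
  have hfloor_le (m : ℕ) : ⌊t * m⌋₊ ≤ m :=
    Nat.floor_le_of_le (mul_le_of_le_one_left m.cast_nonneg ht.2)
  have hfloor : Tendsto (fun k => (⌊t * u k⌋₊ / u k : ℝ)) atTop (𝓝 t) :=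
    (tendsto_nat_floor_mul_div_atTop ht.1).comp (tendsto_natCast_atTop_atTop.comp hu)
  have hlow : Tendsto (fun k => f (⌊t * u k⌋₊ / u k)) atTop (𝓝 (f t)) :=
    (hf t ht).tendsto.comp (tendsto_nhdsWithin_iff.2
      ⟨hfloor, Eventually.of_forall fun k => natCast_div_natCast_mem_Icc (hfloor_le _)⟩)
  rw [hsup]
  exact tendsto_of_tendsto_of_tendsto_of_le_of_le hlow tendsto_const_nhds
    (fun k => le_gridMax f (hfloor_le _))
    fun k => gridMax_le fun i hi => hmax (natCast_div_natCast_mem_Icc hi)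

end Grid

section RandomGrid

variable {Ω : Type*} {mΩ : MeasurableSpace Ω} {μ : Measure Ω} {X : ℝ → Ω → ℝ}

theorem integrable_gridMax (hX : ∀ t ∈ Icc (0 : ℝ) 1, Integrable (X t) μ) (m : ℕ) :
    Integrable (fun ω => gridMax (X · ω) m) μ :=
  integrable_iSup_of_finite fun i => hX _ (natCast_div_natCast_mem_Icc (by omega))

theorem integral_iSup_le_of_forall_integral_gridMax_pow_le
    (hX : ∀ t ∈ Icc (0 : ℝ) 1, Integrable (X t) μ)
    (hcont : ∀ᵐ ω ∂μ, ContinuousOn (fun t => X t ω) (Icc 0 1)) {n : ℕ} (hn : 1 < n) {B : ℝ}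
    (hB : ∀ k, ∫ ω, gridMax (X · ω) (n ^ (k + 1)) ∂μ ≤ B) :
    ∫ ω, ⨆ t : Icc (0 : ℝ) 1, X t ω ∂μ ≤ B := by
  refine integral_le_of_tendsto_of_monotone (fun k => integrable_gridMax hX _)
    (Eventually.of_forall fun ω => monotone_nat_of_le_succ fun k => ?_) ?_ hB
  · rw [pow_succ n (k + 1)]
    exact gridMax_le_gridMax_mul _ _ (by omega)
  · filter_upwards [hcont] with ω hω
    exact tendsto_gridMax hω
      ((tendsto_pow_atTop_atTop_of_one_lt hn).comp (tendsto_add_atTop_nat 1))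

end RandomGrid

section Series

variable {x : ℝ}

theorem sum_pow_mul_one_add_div_four_le (hx0 : 0 ≤ x) (hx1 : x < 1) (K : ℕ) :
    ∑ j ∈ Finset.range K, x ^ j * (1 + j / 4) ≤ (1 - x)⁻¹ + x / (1 - x) ^ 2 / 4 := by
  have hsum : HasSum (fun j : ℕ => x ^ j * (1 + j / 4)) ((1 - x)⁻¹ + x / (1 - x) ^ 2 / 4) := by
    convert! (hasSum_geometric_of_lt_one hx0 hx1).add ((hasSum_coe_mul_geometric_of_norm_lt_one
      (by rwa [norm_of_nonneg hx0])).div_const 4) using 2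
    ring
  exact sum_le_hasSum _ (fun j _ => by positivity) hsum

theorem inv_one_sub_add_div_sq_le (hx0 : 0 ≤ x) (hx : x ≤ 1 / 2) :
    (1 - x)⁻¹ + x / (1 - x) ^ 2 / 4 ≤ 1 + 3 * x := by
  have hinv : (1 - x)⁻¹ ≤ 1 + 2 * x := by
    rw [inv_le_iff_one_le_mul₀ (by linarith)]
    nlinarith
  have hsq : x / (1 - x) ^ 2 / 4 ≤ x := by
    rw [div_div]
    exact div_le_self hx0 (by nlinarith)
  linarith

theorem sqrt_two_mul_log_pow_le (n k : ℕ) :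
    √(2 * log ((n ^ (k + 2) : ℕ) : ℝ)) ≤ 2 * √(log n) * (1 + k / 4) := by
  have hlog : 0 ≤ log (n : ℝ) := log_natCast_nonneg n
  refine sqrt_le_iff.2 ⟨by positivity, ?_⟩
  rw [mul_pow, mul_pow, sq_sqrt hlog, Nat.cast_pow, log_pow]
  push_cast
  nlinarith [mul_nonneg hlog (sq_nonneg (k : ℝ))]

end Series

/-- `X` is integrable at time `0`, and its increments over `[0, 1]` are sub-Gaussian with variance
proxy `(C |t - s| ^ H) ^ 2` (in particular they have mean zero). Chaining uses no more than this
from a centered Gaussian process with `‖X_t - X_s‖₂ ≤ C |t - s| ^ H`. The constant `C` is an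
`NNReal` because the variance proxy of `HasSubgaussianMGF` is one. -/
structure IsHolderSubgaussian {Ω : Type*} {mΩ : MeasurableSpace Ω} (X : ℝ → Ω → ℝ) (C : NNReal)
    (H : ℝ) (μ : Measure Ω) : Prop where
  integrable_zero : Integrable (X 0) μ
  hasSubgaussianMGF_sub : ∀ s ∈ Icc (0 : ℝ) 1, ∀ t ∈ Icc (0 : ℝ) 1,
    HasSubgaussianMGF (fun ω => X t ω - X s ω) ((C * nndist t s ^ H) ^ 2) μ

namespace IsHolderSubgaussian

variable {Ω : Type*} {mΩ : MeasurableSpace Ω} {μ : Measure Ω} {X : ℝ → Ω → ℝ} {C : NNReal} {H : ℝ}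

theorem integrable (hX : IsHolderSubgaussian X C H μ) : ∀ t ∈ Icc (0 : ℝ) 1, Integrable (X t) μ :=
  fun t ht =>
  ((hX.hasSubgaussianMGF_sub 0 (by simp) t ht).integrable.add hX.integrable_zero).congr
    (Eventually.of_forall fun ω => sub_add_cancel (X t ω) (X 0 ω))

variable [IsProbabilityMeasure μ]

theorem integral_gridMax_mul_le (hX : IsHolderSubgaussian X C H μ) (hH : 0 ≤ H) {m n : ℕ}
    (hm : m ≠ 0) (hn : n ≠ 0) :
    ∫ ω, gridMax (X · ω) (m * n) ∂μ ≤
      ∫ ω, gridMax (X · ω) m ∂μ + C / (m : ℝ) ^ H * √(2 * log (m * n : ℕ)) := by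
  have : NeZero (m * n) := ⟨mul_ne_zero hm hn⟩
  let D (i : Fin (m * n)) (ω : Ω) : ℝ := X (i / (m * n : ℕ)) ω - X ((i / n : ℕ) / m) ω
  have hD (i : Fin (m * n)) : HasSubgaussianMGF (D i) ((C / (m : NNReal) ^ H) ^ 2) μ := by
    refine hasSubgaussianMGF_mono (hX.hasSubgaussianMGF_sub _ (natCast_div_natCast_mem_Icc
      (Nat.div_le_of_le_mul (mul_comm m n ▸ i.2.le))) _ (natCast_div_natCast_mem_Icc i.2.le)) ?_
    rw [div_eq_mul_inv C, ← NNReal.inv_rpow, ← one_div]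
    gcongr
    exact_mod_cast abs_div_mul_sub_div_div_le i m n
  have hDmax : Integrable (fun ω => ⨆ i, D i ω) μ :=
    integrable_iSup_of_finite fun i => (hD i).integrable
  calc ∫ ω, gridMax (X · ω) (m * n) ∂μ
      ≤ ∫ ω, (gridMax (X · ω) m + ⨆ i, D i ω) ∂μ :=
        integral_mono (integrable_gridMax hX.integrable _)
          ((integrable_gridMax hX.integrable m).add hDmax) fun ω => gridMax_mul_le (X · ω) hm hn
    _ = ∫ ω, gridMax (X · ω) m ∂μ + ∫ ω, ⨆ i, D i ω ∂μ :=
        integral_add (integrable_gridMax hX.integrable m) hDmax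
    _ ≤ ∫ ω, gridMax (X · ω) m ∂μ + C / (m : ℝ) ^ H * √(2 * log (m * n : ℕ)) := by
        gcongr
        refine (integral_iSup_le_sqrt_log_card hD).trans_eq ?_
        rw [Fintype.card_fin, NNReal.coe_pow, mul_right_comm, mul_comm, sqrt_mul (by positivity),
          sqrt_sq NNReal.zero_le_coe]
        push_cast
        rfl

theorem integral_gridMax_pow_le (hX : IsHolderSubgaussian X C H μ) (hH : 0 ≤ H) {n : ℕ}
    (hn : n ≠ 0) (K : ℕ) :
    ∫ ω, gridMax (X · ω) (n ^ (K + 1)) ∂μ ≤ ∫ ω, gridMax (X · ω) n ∂μ +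
      2 * C * √(log n) / (n : ℝ) ^ H *
        ∑ j ∈ Finset.range K, ((n : ℝ) ^ H)⁻¹ ^ j * (1 + j / 4) := by
  induction K with
  | zero => simp
  | succ K ih =>
    have hmesh : ((n ^ (K + 1) : ℕ) : ℝ) ^ H = ((n : ℝ) ^ H) ^ (K + 1) := by
      rw [Nat.cast_pow, rpow_pow_comm n.cast_nonneg]
    calc ∫ ω, gridMax (X · ω) (n ^ (K + 2)) ∂μ
        ≤ ∫ ω, gridMax (X · ω) (n ^ (K + 1)) ∂μ +
            C / ((n ^ (K + 1) : ℕ) : ℝ) ^ H * √(2 * log (n ^ (K + 2) : ℕ)) :=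
          hX.integral_gridMax_mul_le hH (pow_ne_zero _ hn) hn
      _ ≤ ∫ ω, gridMax (X · ω) (n ^ (K + 1)) ∂μ +
            C / ((n : ℝ) ^ H) ^ (K + 1) * (2 * √(log n) * (1 + K / 4)) := by
          rw [hmesh]
          gcongr
          exact sqrt_two_mul_log_pow_le n K
      _ = ∫ ω, gridMax (X · ω) (n ^ (K + 1)) ∂μ + 2 * C * √(log n) / (n : ℝ) ^ H *
            (((n : ℝ) ^ H)⁻¹ ^ K * (1 + K / 4)) := by
          rw [pow_succ ((n : ℝ) ^ H), inv_pow]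
          field_simp
      _ ≤ _ := by
          rw [Finset.sum_range_succ, mul_add]
          linarith

theorem integral_iSup_sub_integral_gridMax_le (hX : IsHolderSubgaussian X C H μ)
    (hcont : ∀ᵐ ω ∂μ, ContinuousOn (fun t => X t ω) (Icc 0 1)) (hH : 0 < H) {n : ℕ} (hn : 1 < n) :
    ∫ ω, ⨆ t : Icc (0 : ℝ) 1, X t ω ∂μ - ∫ ω, gridMax (X · ω) n ∂μ ≤
      2 * C * √(log n) / (n : ℝ) ^ H *
        ((1 - ((n : ℝ) ^ H)⁻¹)⁻¹ + ((n : ℝ) ^ H)⁻¹ / (1 - ((n : ℝ) ^ H)⁻¹) ^ 2 / 4) := by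
  have hx1 : ((n : ℝ) ^ H)⁻¹ < 1 := inv_lt_one_of_one_lt₀ (one_lt_rpow (Nat.one_lt_cast.2 hn) hH)
  rw [sub_le_iff_le_add']
  refine integral_iSup_le_of_forall_integral_gridMax_pow_le hX.integrable hcont hn fun K => ?_
  refine (hX.integral_gridMax_pow_le hH.le (by omega) K).trans ?_
  gcongr
  exact sum_pow_mul_one_add_div_four_le (by positivity) hx1 K

end IsHolderSubgaussian

theorem stmt3_general {Ω : Type*} [MeasurableSpace Ω] {μ : Measure Ω} [IsProbabilityMeasure μ]
    {X : ℝ → Ω → ℝ} {C : NNReal} {H : ℝ} (hX : IsHolderSubgaussian X C H μ)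
    (hcont : ∀ᵐ ω ∂μ, ContinuousOn (fun t => X t ω) (Icc 0 1)) (hH : 0 < H) {n : ℕ}
    (hn : (2 : ℝ) ^ (1 / H) ≤ n) :
    ∫ ω, ⨆ t : Icc (0 : ℝ) 1, X t ω ∂μ - ∫ ω, gridMax (X · ω) n ∂μ ≤
      2 * C * √(log n) / (n : ℝ) ^ H * (1 + 3 / (n : ℝ) ^ H) := by
  have hn1 : 1 < n := by
    exact_mod_cast (one_lt_rpow one_lt_two (one_div_pos.2 hH)).trans_le hn
  have hnH : 2 ≤ (n : ℝ) ^ H := by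
    rwa [one_div, rpow_inv_le_iff_of_pos zero_le_two n.cast_nonneg hH] at hn
  have hx : ((n : ℝ) ^ H)⁻¹ ≤ 1 / 2 := by
    rw [one_div]
    gcongr
  refine (hX.integral_iSup_sub_integral_gridMax_le hcont hH hn1).trans ?_
  rw [div_eq_mul_inv 3]
  gcongr _ * ?_
  exact inv_one_sub_add_div_sq_le (by positivity) hx

section Gaussian

variable {Ω : Type} [MeasurableSpace Ω] {μ : Measure Ω} {Y : Ω → ℝ} {v : NNReal}

theorem hasSubgaussianMGF_of_map_eq_gaussianReal (hY : μ.map Y = gaussianReal 0 v) :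
    HasSubgaussianMGF Y v μ where
  integrable_exp_mul t := by
    have hmeas : AEMeasurable Y μ := aemeasurable_of_map_neZero (by rw [hY]; infer_instance)
    have hexp : Integrable (fun x => exp (t * x)) (μ.map Y) :=
      hY ▸ integrable_exp_mul_gaussianReal t
    exact hexp.comp_aemeasurable hmeas
  mgf_le t := by rw [mgf_gaussianReal hY, zero_mul, zero_add]

theorem sq_l2norm_of_map_eq_gaussianReal (hY : μ.map Y = gaussianReal 0 v) :
    l2norm μ Y ^ 2 = v := by
  have hmeas : AEMeasurable Y μ := aemeasurable_of_map_neZero (by rw [hY]; infer_instance)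
  rw [l2norm, sq_sqrt (integral_nonneg fun ω => sq_nonneg _),
    ← integral_map (f := fun x : ℝ => x ^ 2) hmeas (by fun_prop), hY,
    ← variance_fun_id_gaussianReal (μ := 0) (v := v),
    variance_of_integral_eq_zero (by fun_prop) integral_id_gaussianReal]

namespace IsCenteredGaussianOn

variable {X : ℝ → Ω → ℝ} {S : Set ℝ} {s t : ℝ}

theorem exists_map_eq (h : IsCenteredGaussianOn μ X S) (ht : t ∈ S) :
    ∃ v : NNReal, μ.map (X t) = gaussianReal 0 v := by
  simpa using h.2 1 ![1] ![t] (by simpa using ht)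

theorem exists_map_sub_eq (h : IsCenteredGaussianOn μ X S) (hs : s ∈ S) (ht : t ∈ S) :
    ∃ v : NNReal, μ.map (fun ω => X t ω - X s ω) = gaussianReal 0 v := by
  simpa [Fin.sum_univ_two, sub_eq_add_neg] using
    h.2 2 ![1, -1] ![t, s] (by simp [Fin.forall_fin_two, hs, ht])

theorem isHolderSubgaussian {C : NNReal} {H : ℝ} (h : IsCenteredGaussianOn μ X (Icc 0 1))
    (hupp : ∀ s ∈ Icc (0 : ℝ) 1, ∀ t ∈ Icc (0 : ℝ) 1,
      l2norm μ (fun ω => X t ω - X s ω) ≤ C * |t - s| ^ H) :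
    IsHolderSubgaussian X C H μ where
  integrable_zero :=
    let ⟨_, hv⟩ := h.exists_map_eq (t := 0) (by simp)
    (hasSubgaussianMGF_of_map_eq_gaussianReal hv).integrable
  hasSubgaussianMGF_sub s hs t ht := by
    obtain ⟨v, hv⟩ := h.exists_map_sub_eq hs ht
    refine hasSubgaussianMGF_mono (hasSubgaussianMGF_of_map_eq_gaussianReal hv) ?_
    rw [← NNReal.coe_le_coe, ← sq_l2norm_of_map_eq_gaussianReal hv]
    push_cast
    rw [Real.dist_eq]
    exact pow_le_pow_left₀ (sqrt_nonneg _) (hupp s hs t ht) 2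

end IsCenteredGaussianOn

end Gaussian

/-- upper bound for the discrete-approximation error `Δ_n (X)` for a
centered Gaussian process with `‖X_t - X_s‖₂ ≤ C |t-s|^H` and `n ≥ 2^{1/H}`. -/
theorem stmt3 {Ω : Type} [MeasurableSpace Ω] (μ : Measure Ω) [IsProbabilityMeasure μ]
    (X : ℝ → Ω → ℝ) (C H : ℝ) (hC : 0 < C) (hH : H ∈ Ioo (0:ℝ) 1)
    (hgauss : IsCenteredGaussianOn μ X (Icc 0 1))
    (hcont : ∀ᵐ ω ∂μ, ContinuousOn (fun t => X t ω) (Icc 0 1))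
    (hupp : ∀ s ∈ Icc (0:ℝ) 1, ∀ t ∈ Icc (0:ℝ) 1,
      l2norm μ (fun ω => X t ω - X s ω) ≤ C * |t - s| ^ H)
    (n : ℕ) (hn : (2:ℝ) ^ (1 / H) ≤ (n : ℝ)) :
    expMax μ X - expMaxGrid μ X n ≤
      2 * C * Real.sqrt (Real.log n) / (n : ℝ) ^ H *
        (1 + 4 / (n : ℝ) ^ H + 0.0074 / Real.log n ^ ((3:ℝ)/2)) := by
  refine (stmt3_general (C := ⟨C, hC.le⟩) (hgauss.isHolderSubgaussian hupp) hcont hH.1 hn).trans ?_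
  exact mul_le_mul_of_nonneg_left (le_add_of_le_of_nonneg (by gcongr; norm_num) (by positivity))
    (by positivity)
end
end

section
/- For each H ∈ (0,1) let B^H be a fractional Brownian motion with Hurst parameter H. Fix finitely many times 0 ≤ t₁ < t₂ < ⋯ < t_k. Then, as H → 0⁺, the law of the random vector (B^H_{t₁}, …, B^H_{t_k}) converges weakly to the law of (Z_{t₁}, …, Z_{t_k}), where Z_t := (ξ_t − ξ_0)/√2 and (ξ_t)_{t≥0} is a family of independent standard normal random variables (in particular Z_0 = 0). -/
open MeasureTheory ProbabilityTheory Real Set Filter Topology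

noncomputable section

/-!
A centered Gaussian vector is determined by its covariances, through its characteristic function, so
by Lévy's continuity theorem it is enough that the covariances converge. As `H → 0⁺`, `x ^ (2 * H)`
tends to the indicator of `x ≠ 0`, hence `E[B^H_s B^H_t]` tends to
`(1_{s ≠ 0} + 1_{t ≠ 0} - 1_{s ≠ t}) / 2`. Bilinearity shows that this is the covariance of
`(ξ_s - ξ_0) / √2` and `(ξ_t - ξ_0) / √2`.
-/

section GaussianVectors

lemma tendsto_probabilityMeasure_of_tendsto_charFun {α E : Type*} {l : Filter α}
    [l.IsCountablyGenerated] [NormedAddCommGroup E] [InnerProductSpace ℝ E]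
    [FiniteDimensional ℝ E] [MeasurableSpace E] [BorelSpace E]
    {ν : α → ProbabilityMeasure E} {ν₀ : ProbabilityMeasure E}
    (h : ∀ x, Tendsto (fun a => charFun (ν a : Measure E) x) l (𝓝 (charFun (ν₀ : Measure E) x))) :
    Tendsto ν l (𝓝 ν₀) :=
  tendsto_of_seq_tendsto fun _ hu =>
    ProbabilityMeasure.tendsto_of_tendsto_charFun fun x => (h x).comp hu

lemma tendsto_integral_of_tendstoInDistribution {α E Ω' : Type*} {l : Filter α}
    [TopologicalSpace E] [MeasurableSpace E] [OpensMeasurableSpace E]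
    {Ω : α → Type*} [∀ a, MeasurableSpace (Ω a)] [MeasurableSpace Ω']
    {P : ∀ a, Measure (Ω a)} [∀ a, IsProbabilityMeasure (P a)]
    {Q : Measure Ω'} [IsProbabilityMeasure Q] {X : ∀ a, Ω a → E} {Z : Ω' → E}
    (h : TendstoInDistribution X l Z P Q) (g : BoundedContinuousFunction E ℝ) :
    Tendsto (fun a => ∫ ω, g (X a ω) ∂P a) l (𝓝 (∫ ω, g (Z ω) ∂Q)) := by
  have hg := ProbabilityMeasure.tendsto_iff_forall_integral_tendsto.1 h.tendsto g
  simp only [ProbabilityMeasure.coe_mk] at hg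
  rw [integral_map h.aemeasurable_limit g.continuous.measurable.aestronglyMeasurable] at hg
  exact hg.congr fun a =>
    integral_map (h.forall_aemeasurable a) g.continuous.measurable.aestronglyMeasurable

lemma charFun_map_toLp_of_hasGaussianLaw {Ω ι : Type*} [Fintype ι] [MeasurableSpace Ω]
    {P : Measure Ω} {X : Ω → ι → ℝ} (hX : HasGaussianLaw X P) (c : EuclideanSpace ℝ ι) :
    charFun (P.map fun ω => WithLp.toLp 2 (X ω)) c =
      Complex.exp ((∑ i, c i * ∫ ω, X ω i ∂P : ℝ) * Complex.I -
        (∑ i, ∑ j, c i * (c j * cov[fun ω => X ω i, fun ω => X ω j; P]) : ℝ) / 2) := by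
  have := hX.isProbabilityMeasure
  have hL2 (i : ι) : MemLp (fun ω => X ω i) 2 P := (hX.eval i).memLp_two
  have hmean : ∫ ω, ∑ i, c i * X ω i ∂P = ∑ i, c i * ∫ ω, X ω i ∂P := by
    rw [integral_finsetSum _ fun i _ => ((hX.eval i).integrable.const_mul (c i))]
    simp_rw [integral_const_mul]
  have hvar : Var[fun ω => ∑ i, c i * X ω i; P] =
      ∑ i, ∑ j, c i * (c j * cov[fun ω => X ω i, fun ω => X ω j; P]) := by
    rw [variance_fun_sum fun i => (hL2 i).const_mul (c i)]
    simp_rw [covariance_const_mul_left, covariance_const_mul_right]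
  have hinner (ω : Ω) : inner ℝ c (WithLp.toLp 2 (X ω)) = ∑ i, c i * X ω i := by
    simp [PiLp.inner_apply, mul_comm]
  rw [(hX.toLp_pi 2).charFun_map_eq]
  simp_rw [hinner, hmean, hvar]

theorem tendstoInDistribution_of_hasGaussianLaw {α ι Ω' : Type*} [Finite ι] {l : Filter α}
    [l.IsCountablyGenerated] {Ω : α → Type*} [∀ a, MeasurableSpace (Ω a)] [MeasurableSpace Ω']
    {P : ∀ a, Measure (Ω a)} [∀ a, IsProbabilityMeasure (P a)]
    {Q : Measure Ω'} [IsProbabilityMeasure Q] {X : ∀ a, Ω a → ι → ℝ} {Z : Ω' → ι → ℝ}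
    (hX : ∀ a, HasGaussianLaw (X a) (P a)) (hZ : HasGaussianLaw Z Q)
    (hmean : ∀ i, Tendsto (fun a => ∫ ω, X a ω i ∂P a) l (𝓝 (∫ ω, Z ω i ∂Q)))
    (hcov : ∀ i j, Tendsto (fun a => cov[fun ω => X a ω i, fun ω => X a ω j; P a]) l
      (𝓝 cov[fun ω => Z ω i, fun ω => Z ω j; Q])) :
    TendstoInDistribution X l Z P Q := by
  have := Fintype.ofFinite ι
  have hLp : TendstoInDistribution (fun a ω => WithLp.toLp 2 (X a ω)) l
      (fun ω => WithLp.toLp 2 (Z ω)) P Q :=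
    { forall_aemeasurable := fun a => ((hX a).toLp_pi 2).aemeasurable
      aemeasurable_limit := (hZ.toLp_pi 2).aemeasurable
      tendsto := by
        refine tendsto_probabilityMeasure_of_tendsto_charFun fun c => ?_
        simp only [ProbabilityMeasure.coe_mk, charFun_map_toLp_of_hasGaussianLaw (hX _),
          charFun_map_toLp_of_hasGaussianLaw hZ]
        have hmean_c := tendsto_finsetSum Finset.univ fun i _ => (hmean i).const_mul (c i)
        have hcov_c := tendsto_finsetSum Finset.univ fun i _ =>
          tendsto_finsetSum Finset.univ fun j _ => ((hcov i j).const_mul (c j)).const_mul (c i)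
        exact ((hmean_c.ofReal.mul_const _).sub (hcov_c.ofReal.div_const 2)).cexp }
  exact hLp.continuous_comp (PiLp.continuous_ofLp 2 _)

end GaussianVectors

section FractionalBrownianMotion

namespace IsCenteredGaussianOn

variable {Ω : Type} [MeasurableSpace Ω] {μ : Measure Ω} {X : ℝ → Ω → ℝ} {S : Set ℝ}

lemma integral_eq_zero (hX : IsCenteredGaussianOn μ X S) {t : ℝ} (ht : t ∈ S) :
    ∫ ω, X t ω ∂μ = 0 := by
  obtain ⟨v, hv⟩ := hX.2 1 1 (fun _ => t) fun _ => ht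
  have hlaw : HasLaw (X t) (gaussianReal 0 v) μ :=
    ⟨(hX.1 t ht).aemeasurable, by simpa using hv⟩
  simpa using hlaw.integral_eq

lemma covariance_eq_integral_mul (hX : IsCenteredGaussianOn μ X S) {s t : ℝ} (hs : s ∈ S)
    (ht : t ∈ S) : cov[X s, X t; μ] = ∫ ω, X s ω * X t ω ∂μ := by
  simp [covariance, hX.integral_eq_zero hs, hX.integral_eq_zero ht]

lemma hasGaussianLaw (hX : IsCenteredGaussianOn μ X S) {ι : Type*} [Finite ι] {t : ι → ℝ}
    (ht : ∀ i, t i ∈ S) : HasGaussianLaw (fun ω i => X (t i) ω) μ where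
  isGaussian_map := by
    classical
    obtain ⟨n, ⟨e⟩⟩ := Finite.exists_equiv_fin ι
    have : Fintype ι := Fintype.ofFinite ι
    have hmeas : Measurable fun ω i => X (t i) ω := measurable_pi_iff.2 fun i => hX.1 _ (ht i)
    refine isGaussian_of_map_eq_gaussianReal fun L => ⟨0, ?_⟩
    obtain ⟨v, hv⟩ :=
      hX.2 n (fun k => L (Pi.single (e.symm k) 1)) (t ∘ e.symm) fun k => ht (e.symm k)
    refine ⟨v, ?_⟩
    rw [Measure.map_map (by fun_prop) hmeas, ← hv]
    congr with ω
    rw [Function.comp_apply, Function.comp_def,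
      Equiv.sum_comp e.symm fun i => L (Pi.single i 1) * X (t i) ω]
    conv_lhs => rw [← Finset.univ_sum_single fun i => X (t i) ω, map_sum]
    refine Finset.sum_congr rfl fun i _ => ?_
    rw [mul_comm, ← smul_eq_mul, ← map_smul, ← Pi.single_smul, smul_eq_mul, mul_one]

end IsCenteredGaussianOn

lemma IsFBM.covariance_eq {Ω : Type} [MeasurableSpace Ω] {μ : Measure Ω} {H : ℝ}
    {B : ℝ → Ω → ℝ} (hB : IsFBM μ H B) {s t : ℝ} (hs : 0 ≤ s) (ht : 0 ≤ t) :
    cov[B s, B t; μ] = (s ^ (2 * H) + t ^ (2 * H) - |t - s| ^ (2 * H)) / 2 := by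
  rw [hB.1.covariance_eq_integral_mul hs ht, hB.2.2.2 s t hs ht]

lemma tendsto_rpow_nhdsGT_zero (x : ℝ) :
    Tendsto (fun p : ℝ => x ^ p) (𝓝[>] 0) (𝓝 (if x = 0 then 0 else 1)) := by
  split_ifs with hx
  · refine tendsto_const_nhds.congr' ?_
    filter_upwards [self_mem_nhdsWithin] with p hp
    rw [hx, Real.zero_rpow (ne_of_gt hp)]
  · simpa using ((Real.continuous_const_rpow hx).tendsto 0).mono_left nhdsWithin_le_nhds

lemma tendsto_fbm_covariance_nhdsGT_zero (s t : ℝ) :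
    Tendsto (fun H : ℝ => (s ^ (2 * H) + t ^ (2 * H) - |t - s| ^ (2 * H)) / 2) (𝓝[>] 0)
      (𝓝 (((if s = 0 then 0 else 1) + (if t = 0 then 0 else 1) -
        (if s = t then 0 else 1)) / 2)) := by
  have htwo : Tendsto (fun H : ℝ => 2 * H) (𝓝[>] 0) (𝓝[>] 0) :=
    tendsto_iff_comap.2 (comap_mulLeft_nhdsGT_zero zero_lt_two).ge
  have hpow (x : ℝ) := (tendsto_rpow_nhdsGT_zero x).comp htwo
  simpa [sub_eq_zero, eq_comm (a := t)] using
    (((hpow s).add (hpow t)).sub (hpow |t - s|)).div_const 2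

end FractionalBrownianMotion

section WhiteNoise

variable {Ω κ : Type*} [MeasurableSpace Ω] {Q : Measure Ω} {ξ : κ → Ω → ℝ}

lemma covariance_of_iIndepFun_stdNormal [DecidableEq κ]
    (hξ : ∀ a, HasLaw (ξ a) (gaussianReal 0 1) Q) (hind : iIndepFun ξ Q) (a b : κ) :
    cov[ξ a, ξ b; Q] = if a = b then 1 else 0 := by
  have hL2 (a : κ) : MemLp (ξ a) 2 Q := (hξ a).hasGaussianLaw.memLp_two
  split_ifs with hab
  · rw [hab, covariance_self (hξ b).aemeasurable, (hξ b).variance_eq]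
    simp
  · exact (hind.indepFun hab).covariance_eq_zero (hL2 a) (hL2 b)

lemma covariance_sub_div_sqrt_two_of_iIndepFun_stdNormal [DecidableEq κ]
    (hξ : ∀ a, HasLaw (ξ a) (gaussianReal 0 1) Q) (hind : iIndepFun ξ Q) (a b o : κ) :
    cov[fun ω => (ξ a ω - ξ o ω) / √2, fun ω => (ξ b ω - ξ o ω) / √2; Q] =
      ((if a = o then 0 else 1) + (if b = o then 0 else 1) - (if a = b then 0 else 1)) / 2 := by
  have := hind.isProbabilityMeasure
  have hL2 (a : κ) : MemLp (ξ a) 2 Q := (hξ a).hasGaussianLaw.memLp_two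
  rw [covariance_fun_div_left, covariance_fun_div_right, div_div,
    Real.mul_self_sqrt zero_le_two, covariance_fun_sub_fun_sub (hL2 a) (hL2 o) (hL2 b) (hL2 o)]
  simp only [covariance_of_iIndepFun_stdNormal hξ hind]
  grind

lemma integral_sub_div_sqrt_two_of_stdNormal (hξ : ∀ a, HasLaw (ξ a) (gaussianReal 0 1) Q)
    (a o : κ) : ∫ ω, (ξ a ω - ξ o ω) / √2 ∂Q = 0 := by
  have hint (a : κ) : Integrable (ξ a) Q := (hξ a).hasGaussianLaw.integrable
  simp [integral_div, integral_sub (hint a) (hint o), (hξ _).integral_eq]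

lemma hasGaussianLaw_sub_div_sqrt_two_of_iIndepFun {ι : Type*} [Finite ι] [Finite κ]
    (hξ : ∀ a, HasGaussianLaw (ξ a) Q) (hind : iIndepFun ξ Q) (σ : ι → κ) (o : κ) :
    HasGaussianLaw (fun ω i => (ξ (σ i) ω - ξ o ω) / √2) Q := by
  have := Fintype.ofFinite ι
  have := Fintype.ofFinite κ
  let coord (a : κ) : (κ → ℝ) →L[ℝ] ℝ := ContinuousLinearMap.proj a
  let L : (κ → ℝ) →L[ℝ] ι → ℝ :=
    ContinuousLinearMap.pi fun i => (√2)⁻¹ • (coord (σ i) - coord o)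
  simpa [L, coord, Function.comp_def, div_eq_inv_mul] using (hind.hasGaussianLaw hξ).map L

end WhiteNoise

/- The index `σ i` stands for the paper's `ξ_{t i}` and `o` for `ξ_0`, so `σ` need only separate
the distinct times from each other and from time `0`. -/
theorem tendstoInDistribution_of_isFBM {α ι κ Ω' : Type*} [Finite ι] [Finite κ] {l : Filter α}
    [l.IsCountablyGenerated] {H : α → ℝ} (hH : Tendsto H l (𝓝[>] 0))
    {Ω : α → Type} [∀ a, MeasurableSpace (Ω a)] [MeasurableSpace Ω']
    {P : ∀ a, Measure (Ω a)} [∀ a, IsProbabilityMeasure (P a)]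
    {Q : Measure Ω'} [IsProbabilityMeasure Q]
    {B : ∀ a, ℝ → Ω a → ℝ} (hB : ∀ a, IsFBM (P a) (H a) (B a))
    {ξ : κ → Ω' → ℝ} (hξ : ∀ a, HasLaw (ξ a) (gaussianReal 0 1) Q) (hind : iIndepFun ξ Q)
    {t : ι → ℝ} (ht : ∀ i, 0 ≤ t i) {σ : ι → κ} {o : κ} (hσo : ∀ i, σ i = o ↔ t i = 0)
    (hσ : ∀ i j, σ i = σ j ↔ t i = t j) :
    TendstoInDistribution (fun a ω i => B a (t i) ω) l
      (fun ω i => (ξ (σ i) ω - ξ o ω) / √2) P Q := by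
  classical
  refine tendstoInDistribution_of_hasGaussianLaw (fun a => (hB a).1.hasGaussianLaw ht)
    (hasGaussianLaw_sub_div_sqrt_two_of_iIndepFun (fun a => (hξ a).hasGaussianLaw) hind σ o)
    (fun i => ?mean) (fun i j => ?cov)
  case mean =>
    simp only [(hB _).1.integral_eq_zero (ht i), integral_sub_div_sqrt_two_of_stdNormal hξ]
    exact tendsto_const_nhds
  case cov =>
    simp only [(hB _).covariance_eq (ht i) (ht j),
      covariance_sub_div_sqrt_two_of_iIndepFun_stdNormal hξ hind, hσo, hσ]
    exact (tendsto_fbm_covariance_nhdsGT_zero (t i) (t j)).comp hH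

theorem stmt7_general {Ω : ℝ → Type} [∀ H, MeasurableSpace (Ω H)] (μ : ∀ H, Measure (Ω H))
    [∀ H, IsProbabilityMeasure (μ H)] (B : ∀ H, ℝ → Ω H → ℝ)
    (hB : ∀ᶠ H in 𝓝[>] 0, IsFBM (μ H) H (B H))
    (k : ℕ) (t : Fin k → ℝ) (ht0 : ∀ j, 0 ≤ t j) (ht : Function.Injective t)
    (g : BoundedContinuousFunction (Fin k → ℝ) ℝ) :
    Tendsto (fun H => ∫ ω, g (fun j => B H (t j) ω) ∂μ H) (𝓝[>] 0)
      (𝓝 (∫ x : Fin (k + 1) → ℝ,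
        g (fun j => if t j = 0 then 0 else (x j.succ - x 0) / √2)
          ∂(Measure.pi fun _ : Fin (k + 1) => gaussianReal 0 1))) := by
  let σ (j : Fin k) : Fin (k + 1) := if t j = 0 then 0 else j.succ
  have hσ_zero (j : Fin k) : σ j = 0 ↔ t j = 0 := by simp [σ, Fin.succ_ne_zero]
  have hσ (i j : Fin k) : σ i = σ j ↔ t i = t j := by
    have := ht.eq_iff (a := i) (b := j)
    grind [Fin.succ_ne_zero, Fin.succ_inj]
  have hZ (x : Fin (k + 1) → ℝ) (j : Fin k) :
      (if t j = 0 then 0 else (x j.succ - x 0) / √2) = (x (σ j) - x 0) / √2 := by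
    by_cases hj : t j = 0 <;> simp [σ, hj]
  -- Convergence in distribution asks for measurability at every index, so `H` is restricted to the
  -- values for which `B H` is a fractional Brownian motion.
  have hlim := tendsto_integral_of_tendstoInDistribution (tendstoInDistribution_of_isFBM
    (α := {H // IsFBM (μ H) H (B H)}) (l := comap (↑) (𝓝[>] (0 : ℝ))) tendsto_comap (fun H => H.2)
    (fun a => (measurePreserving_eval (fun _ : Fin (k + 1) => gaussianReal 0 1) a).hasLaw)
    (iIndepFun_pi (X := fun _ => id) fun _ => aemeasurable_id) ht0 hσ_zero hσ) g
  simp_rw [hZ]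
  exact (tendsto_comap'_iff (mem_of_superset hB fun H hH => ⟨⟨H, hH⟩, rfl⟩)).1 hlim

/-- as `H → 0⁺`, the finite-dimensional distributions of `B^H` at times
`0 ≤ t₁ < … < t_k` converge weakly to those of `Z_t = (ξ_t - ξ_0)/√2` (with `Z_0 = 0`),
where the `ξ`'s are i.i.d. standard normal. Weak convergence is expressed by testing
against bounded continuous functions. -/
theorem stmt7 {Ω : Type} [MeasurableSpace Ω] (μ : Measure Ω) [IsProbabilityMeasure μ]
    (B : ℝ → ℝ → Ω → ℝ) (hB : ∀ H ∈ Ioo (0:ℝ) 1, IsFBM μ H (B H))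
    (k : ℕ) (t : Fin k → ℝ) (ht0 : ∀ j, 0 ≤ t j) (htmono : StrictMono t)
    (g : BoundedContinuousFunction (Fin k → ℝ) ℝ) :
    Tendsto (fun H => ∫ ω, g (fun j => B H (t j) ω) ∂μ) (𝓝[>] (0:ℝ))
      (𝓝 (∫ x : Fin (k + 1) → ℝ,
        g (fun j => if t j = 0 then 0 else (x j.succ - x 0) / Real.sqrt 2)
          ∂(Measure.pi fun _ : Fin (k + 1) => gaussianReal 0 1))) :=
  stmt7_general (fun _ => μ) B (mem_of_superset (Ioo_mem_nhdsGT zero_lt_one) hB) k t ht0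
    htmono.injective g
end
end
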